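/- For every fixed nonnegative integer m, the probability that two independent uniformly random spanning trees of K_n have exactly m edges in common converges to 2^m e^{−2} / m! as n → ∞. That is, X_n converges in distribution to a Poisson distribution with expected value 2. -/

import Mathlib

/-- `P(Xₙ = m)`: the number of ordered pairs `(T₁, T₂)` of spanning trees of `K_n`
with exactly `m` common edges, divided by the number `n^(2(n-2))` of such pairs. -/
noncomputable def probCommonEdgesEq (n m : ℕ) : ℝ :=
  (Nat.card {p : SimpleGraph (Fin n) × SimpleGraph (Fin n) //
      p.1.IsTree ∧ p.2.IsTree ∧ Nat.card (p.1 ⊓ p.2).edgeSet = m} : ℝ) /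
    (n : ℝ) ^ (2 * (n - 2))

/-!
The binomial moments of the number `X` of common edges determine its distribution in the limit.
Counting the `k`-edge subsets of the common edges, `E[X choose k]` is the sum, over the forests `F`
with `k` edges, of the squared probability that a random spanning tree contains `F`. By Moon's
formula that probability is `P(F) / n ^ k`, where `P(F)` is the product of the component sizes
of `F`.

Let `W k` be the sum of `P(F) ^ 2` over the forests with `k` edges. Building each forest with
`k + 1` edges by adding an edge to a forest `F` with `k` edges, between components of sizes `a` and
`b`, multiplies `P(F)` by `1 / a + 1 / b`. Summed over all ordered pairs of vertices in distinct
components, and using `4 / (a * b) ≤ (1 / a + 1 / b) ^ 2` below and `1 / a + 1 / b ≤ 2` above, this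
gives `4 (n - k) (n - k - 1) W k ≤ 2 (k + 1) W (k + 1) ≤ 4 n ^ 2 W k`. Hence
`W k / n ^ (2 * k) → 2 ^ k / k!`, the binomial moments of the Poisson distribution with mean `2`,
and the Bonferroni inequalities turn convergence of binomial moments into convergence of
probabilities.
-/

open Finset Filter SimpleGraph
open scoped Topology Nat

/-! ### Binomial moments -/

section BinomialMoments

lemma sum_range_neg_one_pow_mul_choose_succ (x J : ℕ) :
    ∑ j ∈ range (J + 1), (-1 : ℝ) ^ j * (x + 1).choose j = (-1) ^ J * x.choose J := by
  exact_mod_cast Int.alternating_sum_range_choose_eq_choose (n := x) (m := J)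

lemma abs_ite_eq_zero_sub_sum_choose_le (x J : ℕ) :
    |(if x = 0 then (1 : ℝ) else 0) - ∑ j ∈ range J, (-1 : ℝ) ^ j * x.choose j| ≤ x.choose J := by
  obtain _ | J := J
  · split_ifs <;> simp
  obtain _ | x := x
  · simp [sum_range_succ']
  · rw [sum_range_neg_one_pow_mul_choose_succ]
    simp [abs_mul, Nat.choose_succ_succ]

lemma abs_ite_eq_sub_sum_choose_le (x m J : ℕ) :
    |(if x = m then (1 : ℝ) else 0) -
        ∑ j ∈ range J, (-1 : ℝ) ^ j * (m + j).choose m * x.choose (m + j)| ≤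
      (m + J).choose m * x.choose (m + J) := by
  have choose_mul (j : ℕ) : ((m + j).choose m * x.choose (m + j) : ℝ) =
      x.choose m * (x - m).choose j := by
    have h := Nat.choose_mul (n := x) (Nat.le_add_right m j)
    rw [Nat.add_sub_cancel_left] at h
    rw [mul_comm]
    exact_mod_cast h
  have ite_eq : (if x = m then (1 : ℝ) else 0) = x.choose m * if x - m = 0 then 1 else 0 := by
    rcases lt_trichotomy x m with h | rfl | h
    · simp [h.ne, Nat.choose_eq_zero_of_lt h]
    · simp
    · simp [h.ne', (Nat.sub_pos_of_lt h).ne']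
  simp only [mul_assoc, choose_mul, ite_eq, mul_left_comm _ (x.choose m : ℝ)]
  rw [← mul_sum, ← mul_sub, abs_mul, Nat.abs_cast]
  gcongr
  exact abs_ite_eq_zero_sub_sum_choose_le (x - m) J

lemma abs_sub_sum_binomialMoment_le {p M : ℕ → ℝ} (hp : ∀ x, 0 ≤ p x)
    (hM : ∀ k, HasSum (fun x ↦ p x * x.choose k) (M k)) (m J : ℕ) :
    |p m - ∑ j ∈ range J, (-1 : ℝ) ^ j * (m + j).choose m * M (m + j)| ≤
      (m + J).choose m * M (m + J) := by
  have hsum : HasSum (fun x ↦ p x * ((if x = m then 1 else 0) -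
        ∑ j ∈ range J, (-1 : ℝ) ^ j * (m + j).choose m * x.choose (m + j)))
      (p m - ∑ j ∈ range J, (-1 : ℝ) ^ j * (m + j).choose m * M (m + j)) := by
    convert! (hasSum_ite_eq m (p m)).sub (hasSum_sum fun j (_ : j ∈ range J) ↦
      (hM (m + j)).mul_left ((-1 : ℝ) ^ j * (m + j).choose m)) using 2 with x
    rw [mul_sub, mul_sum]
    congr! 1
    · aesop
    · congr! 1
      ring
  refine hsum.norm_le_of_bounded ((hM (m + J)).mul_left _) fun x ↦ ?_
  rw [norm_mul, Real.norm_of_nonneg (hp x), mul_left_comm]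
  gcongr
  · exact hp x
  · exact abs_ite_eq_sub_sum_choose_le x m J

theorem tendsto_of_tendsto_binomialMoment {ι : Type*} {l : Filter ι} {p M : ι → ℕ → ℝ}
    {b : ℕ → ℝ} {m : ℕ} {q : ℝ} (hp : ∀ i x, 0 ≤ p i x)
    (hM : ∀ᶠ i in l, ∀ k, HasSum (fun x ↦ p i x * x.choose k) (M i k))
    (hb : ∀ k, Tendsto (fun i ↦ M i k) l (𝓝 (b k)))
    (hq : HasSum (fun j ↦ (-1 : ℝ) ^ j * (m + j).choose m * b (m + j)) q) :
    Tendsto (fun i ↦ p i m) l (𝓝 q) := by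
  let partialSum (B : ℕ → ℝ) (J : ℕ) := ∑ j ∈ range J, (-1 : ℝ) ^ j * (m + j).choose m * B (m + j)
  let error (B : ℕ → ℝ) (J : ℕ) := |partialSum B J - q| + |(m + J).choose m * B (m + J)|
  have error_limit : Tendsto (error b) atTop (𝓝 0) := by
    have h := (hq.tendsto_sum_nat.sub_const q).abs.add
      hq.summable.tendsto_atTop_zero.abs
    simpa [error, partialSum, abs_mul] using h
  refine Metric.tendsto_nhds.mpr fun ε hε ↦ ?_
  obtain ⟨J, hJ⟩ := (error_limit.eventually_lt_const hε).exists
  have error_tendsto : Tendsto (fun i ↦ error (M i) J) l (𝓝 (error b J)) :=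
    ((tendsto_finsetSum _ fun j _ ↦ (hb (m + j)).const_mul _).sub_const q).abs.add
      ((hb (m + J)).const_mul _).abs
  filter_upwards [hM, error_tendsto.eventually_lt_const hJ] with i hMi hi
  calc dist (p i m) q ≤ |p i m - partialSum (M i) J| + |partialSum (M i) J - q| :=
        dist_triangle _ _ _
    _ ≤ error (M i) J := by
        rw [add_comm]
        exact add_le_add_right
          ((abs_sub_sum_binomialMoment_le (hp i) hMi m J).trans (le_abs_self _)) _
    _ < ε := hi

lemma hasSum_neg_one_pow_mul_choose_mul_pow_div_factorial (c : ℝ) (m : ℕ) :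
    HasSum (fun j ↦ (-1 : ℝ) ^ j * (m + j).choose m * (c ^ (m + j) / (m + j)!))
      (c ^ m * Real.exp (-c) / m !) := by
  have h := (NormedSpace.expSeries_div_hasSum_exp (-c)).mul_left (c ^ m / m !)
  rw [← Real.exp_eq_exp_ℝ] at h
  convert! h using 1
  · ext j
    rw [Nat.cast_add_choose ℝ, neg_pow c, pow_add]
    field
  · ring

end BinomialMoments

/-! ### Components of a graph with an added edge -/

section Components

variable {V : Type*} {G : SimpleGraph V} {u v : V}

lemma reachable_sup_edge_iff {x y : V} :
    (G ⊔ edge u v).Reachable x y ↔ G.Reachable x y ∨ (G.Reachable x u ∧ G.Reachable v y) ∨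
      (G.Reachable x v ∧ G.Reachable u y) := by
  constructor
  · rintro ⟨w⟩
    induction w with
    | nil => exact .inl .rfl
    | cons hadj _ ih =>
      rw [sup_adj, edge_adj] at hadj
      have hsymm {a b : V} : G.Reachable a b → G.Reachable b a := .symm
      have htrans {a b c : V} : G.Reachable a b → G.Reachable b c → G.Reachable a c := .trans
      have hrefl (a : V) : G.Reachable a a := .rfl
      have hadj' {a b : V} : G.Adj a b → G.Reachable a b := Adj.reachable
      grind
  · have hmono {a b : V} (h : G.Reachable a b) : (G ⊔ edge u v).Reachable a b := h.mono le_sup_left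
    have huv : (G ⊔ edge u v).Reachable u v := by
      obtain rfl | hne := eq_or_ne u v
      · exact .rfl
      · exact Adj.reachable (by simp [edge_adj, hne])
    rintro (h | ⟨hx, hy⟩ | ⟨hx, hy⟩)
    · exact hmono h
    · exact (hmono hx).trans (huv.trans (hmono hy))
    · exact (hmono hx).trans (huv.symm.trans (hmono hy))

lemma supp_connectedComponentMk_sup_edge :
    ((G ⊔ edge u v).connectedComponentMk u).supp =
      (G.connectedComponentMk u).supp ∪ (G.connectedComponentMk v).supp := by
  ext x
  simp only [ConnectedComponent.mem_supp_iff, ConnectedComponent.eq, reachable_sup_edge_iff,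
    Set.mem_union]
  have hrefl : G.Reachable u u := .rfl
  tauto

lemma supp_connectedComponentMk_sup_edge_of_not_reachable {w : V} (hu : ¬ G.Reachable w u)
    (hv : ¬ G.Reachable w v) :
    ((G ⊔ edge u v).connectedComponentMk w).supp = (G.connectedComponentMk w).supp := by
  ext x
  simp only [ConnectedComponent.mem_supp_iff, ConnectedComponent.eq, reachable_sup_edge_iff,
    G.reachable_comm (u := x), G.reachable_comm (v := w), hu, hv, and_false, or_false]

@[to_additive]
lemma prod_supp_sup_edge_mul [Fintype G.ConnectedComponent]
    [Fintype (G ⊔ edge u v).ConnectedComponent] {M : Type*} [CommMonoid M] (f : Set V → M)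
    (huv : ¬ G.Reachable u v) :
    (∏ c : (G ⊔ edge u v).ConnectedComponent, f c.supp) *
        (f (G.connectedComponentMk u).supp * f (G.connectedComponentMk v).supp) =
      (∏ c : G.ConnectedComponent, f c.supp) *
        f ((G.connectedComponentMk u).supp ∪ (G.connectedComponentMk v).supp) := by
  classical
  set A := G.connectedComponentMk u
  set B := G.connectedComponentMk v
  have hAB : A ≠ B := by simpa [A, B] using huv
  have hrest : ∏ c ∈ {A, B}ᶜ, f c.supp =
      ∏ c ∈ {(G ⊔ edge u v).connectedComponentMk u}ᶜ, f c.supp := by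
    have mk_mem (w : V) : G.connectedComponentMk w ∈ ({A, B}ᶜ : Finset _) ↔
        ¬ G.Reachable w u ∧ ¬ G.Reachable w v := by
      simp [A, B]
    refine prod_nbij (.map (.ofLE le_sup_left)) ?_ ?_ ?_ ?_
    · refine ConnectedComponent.ind fun w hw ↦ ?_
      rw [mk_mem] at hw
      simp [reachable_sup_edge_iff, hw]
    · refine ConnectedComponent.ind fun w hw ↦ ConnectedComponent.ind fun w' hw' h ↦ ?_
      rw [mem_coe, mk_mem] at hw
      simpa [reachable_sup_edge_iff, hw] using h
    · refine ConnectedComponent.ind fun w hw ↦ ⟨G.connectedComponentMk w, ?_, rfl⟩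
      rw [mem_coe, mk_mem]
      simp only [coe_compl, coe_singleton, Set.mem_compl_singleton_iff, ne_eq,
        ConnectedComponent.eq, reachable_sup_edge_iff, not_or, not_and] at hw
      exact ⟨hw.1, fun h ↦ hw.2.2 h .rfl⟩
    · refine ConnectedComponent.ind fun w hw ↦ ?_
      rw [mk_mem] at hw
      exact congrArg f (supp_connectedComponentMk_sup_edge_of_not_reachable hw.1 hw.2).symm
  rw [← prod_compl_mul_prod {A, B}, ← prod_compl_mul_prod {(G ⊔ edge u v).connectedComponentMk u},
    prod_pair hAB, prod_singleton, hrest, supp_connectedComponentMk_sup_edge]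
  exact mul_right_comm _ _ _

lemma card_connectedComponent_sup_edge_add_one [Finite V] (huv : ¬ G.Reachable u v) :
    Nat.card (G ⊔ edge u v).ConnectedComponent + 1 = Nat.card G.ConnectedComponent := by
  classical
  have := Fintype.ofFinite G.ConnectedComponent
  have := Fintype.ofFinite (G ⊔ edge u v).ConnectedComponent
  have h := sum_supp_sup_edge_add (fun _ ↦ 1) huv
  simp only [sum_const, card_univ, smul_eq_mul, mul_one, ← Nat.card_eq_fintype_card] at h
  lia

/-- The product of the numbers of vertices of the connected components of `G`. By Moon's
formula it governs the number of spanning trees containing a forest `G`. As a `finprod` it has the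
junk value `1` if infinitely many factors differ from `1`. -/
noncomputable def componentProd (G : SimpleGraph V) : ℕ :=
  ∏ᶠ c : G.ConnectedComponent, c.supp.ncard

lemma componentProd_bot : componentProd (⊥ : SimpleGraph V) = 1 := by
  refine finprod_eq_one_of_forall_eq_one (ConnectedComponent.ind fun v ↦ ?_)
  rw [Set.ncard_eq_one]
  exact ⟨v, by ext; simp⟩

lemma componentProd_of_connected (hG : G.Connected) : componentProd G = Nat.card V := by
  have := hG.preconnected.subsingleton_connectedComponent
  have := hG.nonempty
  obtain ⟨c⟩ : Nonempty G.ConnectedComponent := inferInstance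
  have hc : c.supp = Set.univ := Set.eq_univ_of_forall fun v ↦ Subsingleton.elim _ c
  rw [componentProd, finprod_eq_single _ c fun d hd ↦ (hd (Subsingleton.elim d c)).elim, hc,
    Set.ncard_univ]

lemma ncard_supp_pos [Finite V] (c : G.ConnectedComponent) : 0 < c.supp.ncard :=
  (Set.ncard_pos c.supp.toFinite).2 c.nonempty_supp

lemma sum_ncard_supp [Finite V] [Fintype G.ConnectedComponent] :
    ∑ c : G.ConnectedComponent, c.supp.ncard = Nat.card V := by
  rw [← Nat.card_congr (Equiv.sigmaFiberEquiv G.connectedComponentMk), Nat.card_sigma]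
  rfl

lemma componentProd_sup_edge_mul [Finite V] (huv : ¬ G.Reachable u v) :
    componentProd (G ⊔ edge u v) *
        ((G.connectedComponentMk u).supp.ncard * (G.connectedComponentMk v).supp.ncard) =
      componentProd G *
        ((G.connectedComponentMk u).supp.ncard + (G.connectedComponentMk v).supp.ncard) := by
  have := Fintype.ofFinite G.ConnectedComponent
  have := Fintype.ofFinite (G ⊔ edge u v).ConnectedComponent
  have hdisj : Disjoint (G.connectedComponentMk u).supp (G.connectedComponentMk v).supp :=
    pairwise_disjoint_supp_connectedComponent G (by simpa using huv)
  rw [componentProd, componentProd, finprod_eq_prod_of_fintype, finprod_eq_prod_of_fintype,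
    ← Set.ncard_union_eq hdisj]
  exact prod_supp_sup_edge_mul Set.ncard huv

lemma componentProd_sup_edge [Finite V] (huv : ¬ G.Reachable u v) :
    (componentProd (G ⊔ edge u v) : ℝ) = componentProd G *
      (1 / (G.connectedComponentMk u).supp.ncard + 1 / (G.connectedComponentMk v).supp.ncard) := by
  have hu := ncard_supp_pos (G.connectedComponentMk u)
  have hv := ncard_supp_pos (G.connectedComponentMk v)
  have h := congrArg (Nat.cast (R := ℝ)) (componentProd_sup_edge_mul huv)
  push_cast at h
  field_simp
  linear_combination h

lemma componentProd_sup_edge_le [Finite V] (huv : ¬ G.Reachable u v) :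
    componentProd (G ⊔ edge u v) ≤ 2 * componentProd G := by
  have hu : (1 : ℝ) ≤ (G.connectedComponentMk u).supp.ncard := mod_cast ncard_supp_pos _
  have hv : (1 : ℝ) ≤ (G.connectedComponentMk v).supp.ncard := mod_cast ncard_supp_pos _
  rify
  rw [componentProd_sup_edge huv, mul_comm, ← one_add_one_eq_two]
  gcongr <;> exact (div_le_one₀ (by linarith)).2 ‹_›

end Components

/-! ### Spanning trees containing a forest -/

section Forests

variable {V : Type*} {G : SimpleGraph V} {u v : V}

lemma ne_of_not_reachable (huv : ¬ G.Reachable u v) : u ≠ v :=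
  fun h ↦ huv (h ▸ .rfl)

lemma ncard_edgeSet_sup_edge [Finite V] (hne : u ≠ v) (huv : ¬ G.Adj u v) :
    (G ⊔ edge u v).edgeSet.ncard = G.edgeSet.ncard + 1 := by
  rw [edgeSet_sup, edgeSet_edge_of_ne hne, Set.union_singleton,
    Set.ncard_insert_of_notMem (mt G.mem_edgeSet.1 huv)]

lemma card_filter_adj [Fintype V] (G : SimpleGraph V) [DecidableRel G.Adj] :
    #{p : V × V | G.Adj p.1 p.2} = 2 * G.edgeSet.ncard := by
  rw [← coe_edgeFinset, Set.ncard_coe_finset, two_mul_card_edgeFinset]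

lemma lt_sup_edge_of_not_reachable (huv : ¬ G.Reachable u v) : G < G ⊔ edge u v :=
  lt_sup_edge G u v (ne_of_not_reachable huv) fun h ↦ huv h.reachable

lemma ncard_edgeSet_add_card_connectedComponent [Finite V] (hG : G.IsAcyclic) :
    G.edgeSet.ncard + Nat.card G.ConnectedComponent = Nat.card V := by
  induction G using WellFoundedGT.induction with | ind G ih =>
  by_cases hconn : G.Preconnected
  · have := hconn.subsingleton_connectedComponent
    cases isEmpty_or_nonempty V
    · have : IsEmpty G.ConnectedComponent := ⟨ConnectedComponent.ind isEmptyElim⟩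
      simp [Set.eq_empty_of_isEmpty]
    · have hcard := (isTree_iff_connected_and_card.1 ⟨⟨hconn⟩, hG⟩).2
      rw [← hcard, Nat.card_coe_set_eq, Nat.card_unique]
  · obtain ⟨u, v, huv⟩ : ∃ u v, ¬ G.Reachable u v := by simpa [Preconnected] using hconn
    have hcard := card_connectedComponent_sup_edge_add_one huv
    have hedges := ncard_edgeSet_sup_edge (ne_of_not_reachable huv) fun h ↦ huv h.reachable
    have := ih _ (lt_sup_edge_of_not_reachable huv) (hG.sup_edge_of_not_reachable huv)
    lia

lemma not_reachable_sdiff_edge (hG : G.IsAcyclic) (huv : G.Adj u v) :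
    ¬ (G \ edge u v).Reachable u v :=
  isBridge_iff.1 (isAcyclic_iff_forall_adj_isBridge.1 hG huv)

lemma sdiff_edge_sup_edge (huv : G.Adj u v) : G \ edge u v ⊔ edge u v = G :=
  sdiff_sup_cancel ((edge_le_iff G).2 (.inr huv))

lemma sup_edge_sdiff_edge (huv : ¬ G.Adj u v) : (G ⊔ edge u v) \ edge u v = G := by
  rw [sup_sdiff_right_self]
  exact ((disjoint_edge _).2 huv).sdiff_eq_left

lemma reachable_iff_adj_of_le {F : SimpleGraph V} (hG : G.IsAcyclic) (hle : F ≤ G)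
    (huv : G.Adj u v) : F.Reachable u v ↔ F.Adj u v := by
  refine ⟨fun h ↦ ?_, Adj.reachable⟩
  by_contra hF
  exact not_reachable_sdiff_edge hG huv
    (h.mono (le_sdiff.2 ⟨hle, (disjoint_edge _).2 hF⟩))

open Classical in
/-- The ordered pairs of vertices in distinct components of `G`: the pairs which can be joined by
a new edge without creating a cycle. -/
noncomputable def separatedPairs [Fintype V] (G : SimpleGraph V) : Finset (V × V) :=
  {p | ¬ G.Reachable p.1 p.2}

lemma mem_separatedPairs [Fintype V] {p : V × V} :
    p ∈ separatedPairs G ↔ ¬ G.Reachable p.1 p.2 := by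
  simp [separatedPairs]

lemma sum_separatedPairs [Fintype V] [Fintype G.ConnectedComponent] {M : Type*} [AddCommMonoid M]
    (f : G.ConnectedComponent × G.ConnectedComponent → M) :
    ∑ p ∈ separatedPairs G, f (G.connectedComponentMk p.1, G.connectedComponentMk p.2) =
      ∑ q ∈ univ.offDiag, (q.1.supp.ncard * q.2.supp.ncard) • f q := by
  classical
  let components (p : V × V) := (G.connectedComponentMk p.1, G.connectedComponentMk p.2)
  have maps_to : ∀ p ∈ separatedPairs G, components p ∈ univ.offDiag := fun p hp ↦ by
    simpa [components, mem_separatedPairs] using hp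
  rw [← sum_fiberwise_of_maps_to' maps_to f]
  refine sum_congr rfl fun q hq ↦ ?_
  have fiber : {p ∈ separatedPairs G | components p = q} =
      q.1.supp.toFinset ×ˢ q.2.supp.toFinset := by
    ext p
    have hne : q.1 ≠ q.2 := (mem_offDiag.1 hq).2.2
    simp only [mem_filter, mem_separatedPairs, mem_product, Set.mem_toFinset,
      ConnectedComponent.mem_supp_iff, components, Prod.ext_iff, and_iff_right_iff_imp]
    rintro ⟨h₁, h₂⟩ h
    exact hne (h₁ ▸ h₂ ▸ ConnectedComponent.eq.2 h)
  rw [sum_const, fiber, card_product, Set.ncard_eq_toFinset_card', Set.ncard_eq_toFinset_card']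

lemma sum_offDiag_add {ι R : Type*} [CommRing R] (s : Finset ι) (f : ι → R) :
    ∑ q ∈ s.offDiag, (f q.1 + f q.2) = 2 * (#s - 1) * ∑ i ∈ s, f i := by
  classical
  have hdiag : s.diag ⊆ s ×ˢ s := by rw [← diag_union_offDiag]; exact subset_union_left
  rw [← product_sdiff_diag, sum_sdiff_eq_sub hdiag, sum_product, sum_diag]
  simp only [sum_add_distrib, sum_const, nsmul_eq_mul, ← mul_sum]
  ring

lemma sum_componentProd_sup_edge [Fintype V] (G : SimpleGraph V) :
    ∑ p ∈ separatedPairs G, (componentProd (G ⊔ edge p.1 p.2) : ℝ) =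
      2 * Fintype.card V * (Nat.card G.ConnectedComponent - 1) * componentProd G := by
  classical
  have := Fintype.ofFinite G.ConnectedComponent
  let size (c : G.ConnectedComponent) : ℝ := c.supp.ncard
  have size_pos (c : G.ConnectedComponent) : 0 < size c := Nat.cast_pos.2 (ncard_supp_pos c)
  calc
    _ = ∑ p ∈ separatedPairs G, componentProd G *
          (1 / size (G.connectedComponentMk p.1) + 1 / size (G.connectedComponentMk p.2)) :=
      sum_congr rfl fun p hp ↦ componentProd_sup_edge (mem_separatedPairs.1 hp)
    _ = ∑ q ∈ univ.offDiag, componentProd G * (size q.1 + size q.2) := by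
      rw [sum_separatedPairs fun q ↦ (componentProd G : ℝ) * (1 / size q.1 + 1 / size q.2)]
      refine sum_congr rfl fun q _ ↦ ?_
      have h₁ := size_pos q.1
      have h₂ := size_pos q.2
      rw [nsmul_eq_mul]
      push_cast
      change size q.1 * size q.2 * _ = _
      field_simp
      ring
    _ = _ := by
      rw [← mul_sum, sum_offDiag_add, ← Nat.cast_sum, sum_ncard_supp, card_univ,
        Nat.card_eq_fintype_card, Nat.card_eq_fintype_card]
      ring

lemma le_sum_componentProd_sup_edge_sq [Fintype V] (G : SimpleGraph V) :
    4 * Nat.card G.ConnectedComponent * (Nat.card G.ConnectedComponent - 1) *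
        (componentProd G : ℝ) ^ 2 ≤
      ∑ p ∈ separatedPairs G, (componentProd (G ⊔ edge p.1 p.2) : ℝ) ^ 2 := by
  classical
  have := Fintype.ofFinite G.ConnectedComponent
  let size (c : G.ConnectedComponent) : ℝ := c.supp.ncard
  have size_pos (c : G.ConnectedComponent) : 0 < size c := Nat.cast_pos.2 (ncard_supp_pos c)
  calc
    _ = ∑ q ∈ (univ : Finset G.ConnectedComponent).offDiag, 4 * (componentProd G : ℝ) ^ 2 := by
      rw [sum_const, offDiag_card, card_univ, nsmul_eq_mul,
        Nat.cast_sub (Nat.le_mul_self _), Nat.card_eq_fintype_card]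
      push_cast
      ring
    _ = ∑ p ∈ separatedPairs G, 4 * (componentProd G : ℝ) ^ 2 *
        (1 / size (G.connectedComponentMk p.1) * (1 / size (G.connectedComponentMk p.2))) := by
      rw [sum_separatedPairs fun q ↦ 4 * (componentProd G : ℝ) ^ 2 *
        (1 / size q.1 * (1 / size q.2))]
      refine sum_congr rfl fun q _ ↦ ?_
      have h₁ := size_pos q.1
      have h₂ := size_pos q.2
      rw [nsmul_eq_mul]
      push_cast
      change _ = size q.1 * size q.2 * _
      field_simp
    _ ≤ _ := by
      refine sum_le_sum fun p hp ↦ ?_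
      rw [componentProd_sup_edge (mem_separatedPairs.1 hp), mul_pow, mul_comm 4, mul_assoc,
        ← mul_assoc 4]
      gcongr
      exact four_mul_le_sq_add _ _

lemma sum_componentProd_sup_edge_sq_le [Fintype V] (G : SimpleGraph V) :
    ∑ p ∈ separatedPairs G, (componentProd (G ⊔ edge p.1 p.2) : ℝ) ^ 2 ≤
      4 * Fintype.card V ^ 2 * (componentProd G : ℝ) ^ 2 := by
  have hcard : (Nat.card G.ConnectedComponent : ℝ) ≤ Fintype.card V := by
    rw [← Nat.card_eq_fintype_card]
    exact_mod_cast Nat.card_le_card_of_surjective G.connectedComponentMk Quot.mk_surjective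
  calc
    _ ≤ ∑ p ∈ separatedPairs G,
        2 * componentProd G * (componentProd (G ⊔ edge p.1 p.2) : ℝ) := by
      refine sum_le_sum fun p hp ↦ ?_
      rw [sq]
      gcongr
      exact_mod_cast componentProd_sup_edge_le (mem_separatedPairs.1 hp)
    _ = 4 * (Fintype.card V * (Nat.card G.ConnectedComponent - 1)) *
        (componentProd G : ℝ) ^ 2 := by
      rw [← mul_sum, sum_componentProd_sup_edge]
      ring
    _ ≤ _ := by
      rw [sq (Fintype.card V : ℝ)]
      gcongr
      linarith

open Classical in
/-- The spanning trees of the complete graph on `V` that contain every edge of `F`. -/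
noncomputable def spanningTreesContaining [Fintype V] (F : SimpleGraph V) :
    Finset (SimpleGraph V) :=
  {T | T.IsTree ∧ F ≤ T}

lemma mem_spanningTreesContaining [Fintype V] {F T : SimpleGraph V} :
    T ∈ spanningTreesContaining F ↔ T.IsTree ∧ F ≤ T := by
  simp [spanningTreesContaining]

lemma spanningTreesContaining_of_isTree [Fintype V] {T : SimpleGraph V} (hT : T.IsTree) :
    spanningTreesContaining T = {T} := by
  ext T'
  rw [mem_spanningTreesContaining, mem_singleton]
  constructor
  · rintro ⟨hT', hle⟩
    exact ((isTree_iff_minimal_connected.1 hT').eq_of_le hT.connected hle).symm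
  · rintro rfl
    exact ⟨hT, le_rfl⟩

lemma card_filter_separatedPairs_adj [Fintype V] {F T : SimpleGraph V} [DecidableRel T.Adj]
    (hT : T.IsTree) (hle : F ≤ T) :
    (#{p ∈ separatedPairs F | T.Adj p.1 p.2} : ℝ) = 2 * (Nat.card F.ConnectedComponent - 1) := by
  classical
  have hF := ncard_edgeSet_add_card_connectedComponent (hT.isAcyclic.anti hle)
  have hcard := (isTree_iff_connected_and_card.1 hT).2
  have hsub : ({p | F.Adj p.1 p.2} : Finset (V × V)) ⊆
      ({p | T.Adj p.1 p.2} : Finset (V × V)) :=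
    monotone_filter_right _ fun _ _ hp ↦ hle hp
  have hsep : {p ∈ separatedPairs F | T.Adj p.1 p.2} =
      ({p | T.Adj p.1 p.2} : Finset (V × V)) \
        ({p | F.Adj p.1 p.2} : Finset (V × V)) := by
    ext p
    rw [mem_filter, mem_separatedPairs, Finset.mem_sdiff, mem_filter_univ, mem_filter_univ,
      and_comm]
    exact and_congr_right fun hp ↦ not_congr (reachable_iff_adj_of_le hT.isAcyclic hle hp)
  rw [hsep, cast_card_sdiff hsub, card_filter_adj T, card_filter_adj F]
  rw [← hF, Nat.card_coe_set_eq] at hcard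
  rify at hcard ⊢
  linear_combination 2 * hcard

lemma sum_card_spanningTreesContaining_sup_edge [Fintype V] (F : SimpleGraph V) :
    ∑ p ∈ separatedPairs F, (#(spanningTreesContaining (F ⊔ edge p.1 p.2)) : ℝ) =
      2 * (Nat.card F.ConnectedComponent - 1) * #(spanningTreesContaining F) := by
  classical
  have stc_sup_edge {p : V × V} (hp : p ∈ separatedPairs F) :
      spanningTreesContaining (F ⊔ edge p.1 p.2) =
        {T ∈ spanningTreesContaining F | T.Adj p.1 p.2} := by
    have hne := ne_of_not_reachable (mem_separatedPairs.1 hp)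
    ext T
    simp only [mem_spanningTreesContaining, mem_filter, sup_le_iff, edge_le_iff, hne, false_or,
      and_assoc]
  calc
    _ = ∑ p ∈ separatedPairs F, (#{T ∈ spanningTreesContaining F | T.Adj p.1 p.2} : ℝ) :=
      sum_congr rfl fun p hp ↦ by rw [stc_sup_edge hp]
    _ = ∑ T ∈ spanningTreesContaining F, (#{p ∈ separatedPairs F | T.Adj p.1 p.2} : ℝ) :=
      mod_cast sum_card_bipartiteAbove_eq_sum_card_bipartiteBelow
        fun (p : V × V) (T : SimpleGraph V) ↦ T.Adj p.1 p.2
    _ = ∑ T ∈ spanningTreesContaining F, 2 * ((Nat.card F.ConnectedComponent : ℝ) - 1) :=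
      sum_congr rfl fun T hT ↦
        have ⟨hTree, hle⟩ := mem_spanningTreesContaining.1 hT
        card_filter_separatedPairs_adj hTree hle
    _ = _ := by rw [sum_const, nsmul_eq_mul, mul_comm]

/-- Moon's formula, multiplied by `|V| ^ 2` so that no negative exponent occurs when `F` has one
component. Summing over all ways of joining two components of `F` by an edge reduces it to forests
with one component fewer. -/
theorem card_spanningTreesContaining_mul_card_sq [Fintype V] [Nonempty V] {F : SimpleGraph V}
    (hF : F.IsAcyclic) :
    #(spanningTreesContaining F) * Fintype.card V ^ 2 =
      Fintype.card V ^ Nat.card F.ConnectedComponent * componentProd F := by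
  induction F using WellFoundedGT.induction with | ind F ih =>
  by_cases hconn : F.Preconnected
  · have hT : F.IsTree := ⟨⟨hconn⟩, hF⟩
    have := hconn.subsingleton_connectedComponent
    rw [spanningTreesContaining_of_isTree hT, componentProd_of_connected hT.connected,
      Nat.card_unique, card_singleton, Nat.card_eq_fintype_card]
    ring
  · obtain ⟨u, v, huv⟩ : ∃ u v, ¬ F.Reachable u v := by simpa [Preconnected] using hconn
    have hcc : 2 ≤ Nat.card F.ConnectedComponent := by
      rw [← card_connectedComponent_sup_edge_add_one huv]
      exact Nat.succ_le_succ Nat.card_pos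
    obtain ⟨c, hc⟩ := Nat.exists_eq_add_of_le' hcc
    rify at ih ⊢
    have sum_ih : ∑ p ∈ separatedPairs F, (#(spanningTreesContaining (F ⊔ edge p.1 p.2)) : ℝ) *
          (Fintype.card V : ℝ) ^ 2 =
        ∑ p ∈ separatedPairs F,
          (Fintype.card V : ℝ) ^ (c + 1) * componentProd (F ⊔ edge p.1 p.2) := by
      refine sum_congr rfl fun p hp ↦ ?_
      rw [mem_separatedPairs] at hp
      have hcard := card_connectedComponent_sup_edge_add_one hp
      rw [ih _ (lt_sup_edge_of_not_reachable hp) (hF.sup_edge_of_not_reachable hp),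
        show Nat.card (F ⊔ edge p.1 p.2).ConnectedComponent = c + 1 by lia]
    rw [← sum_mul, ← mul_sum, sum_card_spanningTreesContaining_sup_edge,
      sum_componentProd_sup_edge, hc] at sum_ih
    have hne : 2 * ((c : ℝ) + 1) ≠ 0 := by positivity
    rw [hc]
    refine mul_left_cancel₀ hne ?_
    push_cast at sum_ih ⊢
    linear_combination sum_ih

open Classical in
/-- The forests with vertex set `V` and exactly `k` edges. -/
noncomputable def forests (V : Type*) [Fintype V] (k : ℕ) : Finset (SimpleGraph V) :=
  {F | F.IsAcyclic ∧ F.edgeSet.ncard = k}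

lemma mem_forests [Fintype V] {F : SimpleGraph V} {k : ℕ} :
    F ∈ forests V k ↔ F.IsAcyclic ∧ F.edgeSet.ncard = k := by
  simp [forests]

lemma forests_zero [Fintype V] : forests V 0 = {⊥} := by
  ext F
  rw [mem_forests, mem_singleton, Set.ncard_eq_zero, edgeSet_eq_empty, and_iff_right_iff_imp]
  rintro rfl
  exact isAcyclic_bot

lemma card_connectedComponent_of_mem_forests [Fintype V] {F : SimpleGraph V} {k : ℕ}
    (hF : F ∈ forests V k) : k + Nat.card F.ConnectedComponent = Fintype.card V := by
  obtain ⟨hacyc, rfl⟩ := mem_forests.1 hF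
  rw [ncard_edgeSet_add_card_connectedComponent hacyc, Nat.card_eq_fintype_card]

lemma sum_forests_sum_separatedPairs_sup_edge [Fintype V] {M : Type*} [AddCommMonoid M]
    (f : SimpleGraph V → M) (k : ℕ) :
    ∑ F ∈ forests V k, ∑ p ∈ separatedPairs F, f (F ⊔ edge p.1 p.2) =
      (2 * (k + 1)) • ∑ F ∈ forests V (k + 1), f F := by
  classical
  have sum_adj : ∀ F ∈ forests V (k + 1), ∑ p : V × V with F.Adj p.1 p.2, f F =
      (2 * (k + 1)) • f F := fun F hF ↦ by
    rw [sum_const, card_filter_adj F, (mem_forests.1 hF).2]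
  rw [← sum_nsmul, ← sum_congr rfl sum_adj, sum_sigma', sum_sigma']
  refine sum_bij' (fun x _ ↦ ⟨x.1 ⊔ edge x.2.1 x.2.2, x.2⟩)
    (fun x _ ↦ ⟨x.1 \ edge x.2.1 x.2.2, x.2⟩) ?_ ?_ ?_ ?_ fun _ _ ↦ rfl <;>
    simp only [mem_sigma, mem_forests, mem_separatedPairs, mem_filter_univ]
  · rintro ⟨F, u, v⟩ ⟨⟨hF, hk⟩, huv⟩
    have hne := ne_of_not_reachable huv
    have hcard := ncard_edgeSet_sup_edge hne fun h ↦ huv h.reachable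
    exact ⟨⟨hF.sup_edge_of_not_reachable huv, by rw [hcard, hk]⟩, by simp [edge_adj, hne]⟩
  · rintro ⟨F, u, v⟩ ⟨⟨hF, hk⟩, huv⟩
    have hsep := not_reachable_sdiff_edge hF huv
    have hcard := ncard_edgeSet_sup_edge huv.ne fun h ↦ hsep h.reachable
    rw [sdiff_edge_sup_edge huv] at hcard
    exact ⟨⟨hF.anti sdiff_le, by lia⟩, hsep⟩
  · rintro ⟨F, u, v⟩ ⟨-, huv⟩
    rw [sup_edge_sdiff_edge fun h ↦ huv h.reachable]
  · rintro ⟨F, u, v⟩ ⟨-, huv⟩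
    rw [sdiff_edge_sup_edge huv]

lemma card_filter_forests_le [Fintype V] [DecidableLE (SimpleGraph V)] (hG : G.IsAcyclic) (k : ℕ) :
    #{F ∈ forests V k | F ≤ G} = G.edgeSet.ncard.choose k := by
  classical
  rw [← coe_edgeFinset, Set.ncard_coe_finset, ← card_powersetCard]
  have edgeFinset_fromEdgeSet {s : Finset (Sym2 V)}
      {_ : Fintype (fromEdgeSet (s : Set (Sym2 V))).edgeSet} (hs : s ⊆ G.edgeFinset) :
      (fromEdgeSet (s : Set (Sym2 V))).edgeFinset = s := by
    ext e
    rw [mem_edgeFinset, edgeSet_fromEdgeSet, Set.mem_sdiff, mem_coe, and_iff_left_iff_imp]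
    exact fun he ↦ G.not_isDiag_of_mem_edgeSet (mem_edgeFinset.1 (hs he))
  refine card_bij' (fun F _ ↦ F.edgeFinset) (fun s _ ↦ fromEdgeSet (s : Set (Sym2 V))) ?_ ?_ ?_ ?_
  · intro F hF
    rw [mem_filter, mem_forests, ← coe_edgeFinset, Set.ncard_coe_finset] at hF
    exact mem_powersetCard.2 ⟨edgeFinset_mono hF.2, hF.1.2⟩
  · intro s hs
    obtain ⟨hs, hk⟩ := mem_powersetCard.1 hs
    have hle : fromEdgeSet (s : Set (Sym2 V)) ≤ G := by
      rw [← edgeFinset_subset_edgeFinset, edgeFinset_fromEdgeSet hs]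
      exact hs
    rw [mem_filter, mem_forests, ← coe_edgeFinset, Set.ncard_coe_finset, edgeFinset_fromEdgeSet hs]
    exact ⟨⟨hG.anti hle, hk⟩, hle⟩
  · intro F _
    rw [coe_edgeFinset, fromEdgeSet_edgeSet]
  · intro s hs
    exact edgeFinset_fromEdgeSet (mem_powersetCard.1 hs).1

end Forests

/-! ### Moments of the number of common edges -/

lemma sum_choose_ncard_edgeSet_inf {V : Type*} [Fintype V] (k : ℕ) :
    ∑ p ∈ (spanningTreesContaining (⊥ : SimpleGraph V)) ×ˢ spanningTreesContaining ⊥,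
        (p.1 ⊓ p.2).edgeSet.ncard.choose k =
      ∑ F ∈ forests V k, #(spanningTreesContaining F) ^ 2 := by
  classical
  set trees := spanningTreesContaining (⊥ : SimpleGraph V)
  have mem_trees {T : SimpleGraph V} : T ∈ trees ↔ T.IsTree := by
    simp [trees, mem_spanningTreesContaining]
  calc
    _ = ∑ p ∈ trees ×ˢ trees, #{F ∈ forests V k | F ≤ p.1 ⊓ p.2} :=
      sum_congr rfl fun p hp ↦ (card_filter_forests_le
        ((mem_trees.1 (mem_product.1 hp).1).isAcyclic.anti inf_le_left) k).symm
    _ = ∑ F ∈ forests V k, #{p ∈ trees ×ˢ trees | F ≤ p.1 ⊓ p.2} :=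
      sum_card_bipartiteAbove_eq_sum_card_bipartiteBelow
        fun (p : SimpleGraph V × SimpleGraph V) F ↦ F ≤ p.1 ⊓ p.2
    _ = _ := by
      refine sum_congr rfl fun F _ ↦ ?_
      rw [sq, ← card_product]
      congr 1
      ext p
      simp only [mem_filter, mem_product, mem_trees, mem_spanningTreesContaining, le_inf_iff,
        and_and_and_comm]

lemma sum_forests_succ_componentProd_sq {V : Type*} [Fintype V] (k : ℕ) :
    2 * (k + 1) * ∑ F ∈ forests V (k + 1), (componentProd F : ℝ) ^ 2 =
      ∑ F ∈ forests V k, ∑ p ∈ separatedPairs F, (componentProd (F ⊔ edge p.1 p.2) : ℝ) ^ 2 := by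
  rw [sum_forests_sum_separatedPairs_sup_edge fun F ↦ (componentProd F : ℝ) ^ 2, nsmul_eq_mul]
  push_cast
  rfl

lemma sum_forests_succ_componentProd_sq_le {V : Type*} [Fintype V] (k : ℕ) :
    2 * (k + 1) * ∑ F ∈ forests V (k + 1), (componentProd F : ℝ) ^ 2 ≤
      4 * Fintype.card V ^ 2 * ∑ F ∈ forests V k, (componentProd F : ℝ) ^ 2 := by
  rw [sum_forests_succ_componentProd_sq, mul_sum]
  exact sum_le_sum fun F _ ↦ sum_componentProd_sup_edge_sq_le F

lemma le_sum_forests_succ_componentProd_sq {V : Type*} [Fintype V] (k : ℕ) :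
    4 * ((Fintype.card V - k) * (Fintype.card V - (k + 1))) *
        ∑ F ∈ forests V k, (componentProd F : ℝ) ^ 2 ≤
      2 * (k + 1) * ∑ F ∈ forests V (k + 1), (componentProd F : ℝ) ^ 2 := by
  rw [sum_forests_succ_componentProd_sq, mul_sum]
  refine sum_le_sum fun F hF ↦ ?_
  have hcc := card_connectedComponent_of_mem_forests hF
  convert! le_sum_componentProd_sup_edge_sq F using 2
  rw [← hcc]
  push_cast
  ring

/-- The `k`-th binomial moment of the number of common edges of two independent uniformly random
spanning trees of `K_n`, `n ≥ 2`, in the closed form which Moon's formula gives it. -/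
noncomputable def forestMoment (n k : ℕ) : ℝ :=
  (∑ F ∈ forests (Fin n) k, (componentProd F : ℝ) ^ 2) / (n : ℝ) ^ (2 * k)

lemma forestMoment_zero (n : ℕ) : forestMoment n 0 = 1 := by
  simp [forestMoment, forests_zero, componentProd_bot]

lemma succ_mul_forestMoment_succ_le {n : ℕ} (hn : n ≠ 0) (k : ℕ) :
    (k + 1) * forestMoment n (k + 1) ≤ 2 * forestMoment n k := by
  have h := sum_forests_succ_componentProd_sq_le (V := Fin n) k
  rw [Fintype.card_fin] at h
  rw [forestMoment, forestMoment, mul_add_one 2 k, add_comm (2 * k), pow_add, ← div_div,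
    ← mul_div_assoc, ← mul_div_assoc 2]
  refine div_le_div_of_nonneg_right ?_ (by positivity)
  rw [← mul_div_assoc, div_le_iff₀ (by positivity)]
  linarith

lemma le_succ_mul_forestMoment_succ {n : ℕ} (hn : n ≠ 0) (k : ℕ) :
    2 * ((1 - k / n) * (1 - (k + 1) / n)) * forestMoment n k ≤
      (k + 1) * forestMoment n (k + 1) := by
  have h := le_sum_forests_succ_componentProd_sq (V := Fin n) k
  rw [Fintype.card_fin] at h
  rw [forestMoment, forestMoment, mul_add_one 2 k, add_comm (2 * k), pow_add, ← div_div,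
    ← mul_div_assoc, ← mul_div_assoc]
  refine div_le_div_of_nonneg_right ?_ (by positivity)
  rw [← mul_div_assoc, le_div_iff₀ (by positivity)]
  field_simp
  linarith

lemma tendsto_forestMoment (k : ℕ) :
    Tendsto (fun n ↦ forestMoment n k) atTop (𝓝 (2 ^ k / k !)) := by
  induction k with
  | zero => simp [forestMoment_zero]
  | succ k ih =>
    have lower : Tendsto
        (fun n : ℕ ↦ 2 * ((1 - k / n) * (1 - (k + 1) / n)) * forestMoment n k) atTop
        (𝓝 (2 * ((1 - 0) * (1 - 0)) * (2 ^ k / k !))) :=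
      (((tendsto_const_div_atTop_nhds_zero_nat (k : ℝ)).const_sub 1).mul
        ((tendsto_const_div_atTop_nhds_zero_nat (k + 1 : ℝ)).const_sub 1)).const_mul 2 |>.mul ih
    simp only [sub_zero, mul_one] at lower
    have hmul : Tendsto (fun n ↦ (k + 1) * forestMoment n (k + 1)) atTop
        (𝓝 (2 * (2 ^ k / k !))) := by
      refine tendsto_of_tendsto_of_tendsto_of_le_of_le' lower (ih.const_mul 2) ?_ ?_ <;>
        filter_upwards [eventually_ne_atTop 0] with n hn
      exacts [le_succ_mul_forestMoment_succ hn k, succ_mul_forestMoment_succ_le hn k]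
    have hk : (k + 1 : ℝ) ≠ 0 := by positivity
    convert! hmul.const_mul (k + 1 : ℝ)⁻¹ using 2
    · rw [inv_mul_cancel_left₀ hk]
    · rw [Nat.factorial_succ]
      push_cast
      field

lemma card_spanningTreesContaining_sq_div {n k : ℕ} (hn : 2 ≤ n) {F : SimpleGraph (Fin n)}
    (hF : F ∈ forests (Fin n) k) :
    (#(spanningTreesContaining F) : ℝ) ^ 2 / n ^ (2 * (n - 2)) =
      (componentProd F : ℝ) ^ 2 / n ^ (2 * k) := by
  have : Nonempty (Fin n) := ⟨⟨0, by lia⟩⟩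
  have hcc := card_connectedComponent_of_mem_forests hF
  have moon := card_spanningTreesContaining_mul_card_sq (mem_forests.1 hF).1
  rw [Fintype.card_fin] at hcc moon
  rify at moon
  have hn4 : (n : ℝ) ^ 4 ≠ 0 := by positivity
  rw [div_eq_div_iff (by positivity) (by positivity)]
  refine mul_right_cancel₀ hn4 ?_
  calc _ = (#(spanningTreesContaining F) * (n : ℝ) ^ 2) ^ 2 * n ^ (2 * k) := by ring
    _ = (componentProd F : ℝ) ^ 2 * n ^ (2 * (k + Nat.card F.ConnectedComponent)) := by
      rw [moon]
      ring
    _ = _ := by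
      rw [hcc, mul_assoc, ← pow_add]
      congr 2
      lia

lemma probCommonEdgesEq_eq_card_filter_div (n m : ℕ) :
    probCommonEdgesEq n m =
      #{p ∈ spanningTreesContaining (⊥ : SimpleGraph (Fin n)) ×ˢ spanningTreesContaining ⊥ |
        (p.1 ⊓ p.2).edgeSet.ncard = m} / n ^ (2 * (n - 2)) := by
  rw [probCommonEdgesEq]
  congr 2
  refine Nat.subtype_card _ fun p ↦ ?_
  rw [Finset.mem_filter, mem_product, mem_spanningTreesContaining, mem_spanningTreesContaining,
    and_iff_left bot_le, and_iff_left bot_le, and_assoc, Nat.card_coe_set_eq]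

lemma hasSum_probCommonEdgesEq_mul_choose {n : ℕ} (hn : 2 ≤ n) (k : ℕ) :
    HasSum (fun x ↦ probCommonEdgesEq n x * x.choose k) (forestMoment n k) := by
  have moment_eq : forestMoment n k =
      (∑ p ∈ spanningTreesContaining (⊥ : SimpleGraph (Fin n)) ×ˢ spanningTreesContaining ⊥,
        ((p.1 ⊓ p.2).edgeSet.ncard.choose k : ℝ)) / n ^ (2 * (n - 2)) := by
    rw [forestMoment, sum_div, ← Nat.cast_sum, sum_choose_ncard_edgeSet_inf, Nat.cast_sum, sum_div]
    refine sum_congr rfl fun F hF ↦ ?_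
    rw [Nat.cast_pow, card_spanningTreesContaining_sq_div hn hF]
  rw [moment_eq]
  set trees := spanningTreesContaining (⊥ : SimpleGraph (Fin n))
  have h := (hasSum_sum fun p (_ : p ∈ trees ×ˢ trees) ↦ hasSum_ite_eq (p.1 ⊓ p.2).edgeSet.ncard
    ((p.1 ⊓ p.2).edgeSet.ncard.choose k : ℝ)).div_const ((n : ℝ) ^ (2 * (n - 2)))
  refine h.congr_fun fun x ↦ ?_
  rw [probCommonEdgesEq_eq_card_filter_div, div_mul_eq_mul_div, ← nsmul_eq_mul, ← sum_const,
    sum_filter]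
  congr 1
  refine sum_congr rfl fun p _ ↦ ?_
  simp only [eq_comm (a := x)]
  split_ifs with hx
  · rw [hx]
  · rfl

/-- For every fixed `m ≥ 0`, the probability that two independent
uniformly random spanning trees of `K_n` have exactly `m` common edges converges to
`2^m e⁻² / m!` as `n → ∞`; that is, `Xₙ` converges in distribution to a Poisson
distribution with expected value `2`. -/
theorem common_edges_poisson_limit (m : ℕ) :
    Filter.Tendsto (fun n => probCommonEdgesEq n m) Filter.atTop
      (nhds (2 ^ m * Real.exp (-2) / m.factorial)) := by
  refine tendsto_of_tendsto_binomialMoment (M := forestMoment) ?_ ?_ tendsto_forestMoment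
    (hasSum_neg_one_pow_mul_choose_mul_pow_div_factorial 2 m)
  · intro n x
    unfold probCommonEdgesEq
    positivity
  · filter_upwards [eventually_ge_atTop 2] with n hn k
    exact hasSum_probCommonEdgesEq_mul_choose hn k
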